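/- Let G = ⟨a, t₁,…,t_r | tᵢ a^(nᵢ) tᵢ⁻¹ = a^(mᵢ)⟩ with r ≥ 2 and nᵢ = mᵢ = p^(σᵢ) for all i (p prime, σᵢ ≥ 0). Then G is residually a finite p-group. -/

import Mathlib

/-!
Conjugating `tᵢ` by powers of `a` gives only `nᵢ` different elements, so `G` embeds in `F ⋊ ℤ`,
where `F` is free on the disjoint union of the `ℤ/nᵢ` and the generator `a` of `ℤ` permutes each
`ℤ/nᵢ` cyclically. When the `nᵢ = p^(σᵢ)` are bounded, `ℤ` acts on `F` through a finite `p`-group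
`Q`, and `F ⋊ ℤ` embeds in `(F ⋊ Q) × ℤ`. An extension of a residually finite-`p` group by a finite
`p`-group is residually finite-`p`, because the normal core of a normal subgroup of `p`-power index
in a normal subgroup of `p`-power index still has `p`-power index.

Free groups are residually finite-`p` by a variant of Magnus' argument: the word
`x_{i₁}^{e₁} ⋯ x_{iₗ}^{eₗ}`, with consecutive indices distinct, is detected by the unitriangular
representation `x_i ↦ 1 + ∑_{iⱼ = i} E_{j,j+1}` over `ℤ/p^k`, which sends it to a matrix with corner
entry `e₁ ⋯ eₗ`.

Unbounded exponents are harmless, since an element involves finitely many stable letters and the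
others can be sent to `1`.
-/

universe u

open Polynomial

section PGroupQuotient

variable {p : ℕ} {G : Type*} [Group G]

theorem isPGroup_quotient_iff {N : Subgroup G} [N.Normal] :
    IsPGroup p (G ⧸ N) ↔ ∀ g : G, ∃ k, g ^ p ^ k ∈ N := by
  simp_rw [isPGroup_iff_pow_pow_eq_one, (QuotientGroup.mk_surjective (s := N)).forall,
    ← QuotientGroup.mk_pow, QuotientGroup.eq_one_iff]

theorem isPGroup_quotient_normalCore_map {K : Subgroup G} [K.Normal] (hK : IsPGroup p (G ⧸ K))
    {N : Subgroup K} [N.Normal] [Finite (K ⧸ N)] (hN : IsPGroup p (K ⧸ N)) :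
    IsPGroup p (G ⧸ (N.map K.subtype).normalCore) := by
  obtain ⟨m, hm⟩ := isPGroup_iff_exists_pow_pow_eq_one.1 hN
  refine isPGroup_quotient_iff.2 fun g => ?_
  obtain ⟨k, hk⟩ := isPGroup_quotient_iff.1 hK g
  refine ⟨k + m, fun b => ?_⟩
  have hconj : b * g ^ p ^ k * b⁻¹ ∈ K := ‹K.Normal›.conj_mem _ hk b
  let c : K := ⟨b * g ^ p ^ k * b⁻¹, hconj⟩
  have hc : c ^ p ^ m ∈ N := (QuotientGroup.eq_one_iff _).1 (hm (c : K ⧸ N))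
  refine ⟨_, hc, ?_⟩
  simp [c, pow_add, pow_mul]

end PGroupQuotient

section pResidual

variable (p : ℕ) (G : Type*) [Group G]

/-- The finite-`p` residual of `G`: the intersection of all normal subgroups of `G` whose quotient
is a finite `p`-group, written `(N_p)_ω(G)` in the literature. The group `G` is residually a finite
`p`-group precisely when it is trivial. -/
def pResidual : Subgroup G :=
  sInf {N | ∃ _ : N.Normal, Finite (G ⧸ N) ∧ IsPGroup p (G ⧸ N)}

end pResidual

namespace pResidual

variable {p : ℕ} {G H Q : Type*} [Group G] [Group H] [Group Q]

theorem le_of_isPGroup {N : Subgroup G} [N.Normal] [Finite (G ⧸ N)] (hN : IsPGroup p (G ⧸ N)) :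
    pResidual p G ≤ N :=
  sInf_le ⟨‹_›, ‹_›, hN⟩

theorem map_eq_one [Finite Q] (hQ : IsPGroup p Q) (f : G →* Q) {g : G} (hg : g ∈ pResidual p G) :
    f g = 1 :=
  have : Finite (G ⧸ f.ker) := .of_injective _ (QuotientGroup.kerLift_injective f)
  le_of_isPGroup (hQ.of_injective _ (QuotientGroup.kerLift_injective f)) hg

theorem map_mem (f : G →* H) {g : G} (hg : g ∈ pResidual p G) : f g ∈ pResidual p H := by
  refine Subgroup.mem_sInf.2 fun N ⟨_, _, hN⟩ => ?_
  exact (QuotientGroup.eq_one_iff _).1 (map_eq_one hN ((QuotientGroup.mk' N).comp f) hg)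

theorem eq_bot_of_injective (hH : pResidual p H = ⊥) (f : G →* H) (hf : Function.Injective f) :
    pResidual p G = ⊥ := by
  refine (Subgroup.eq_bot_iff_forall _).2 fun g hg => ?_
  exact (map_eq_one_iff f hf).1 (Subgroup.mem_bot.1 (hH ▸ map_mem f hg))

theorem exists_hom_ne_one {G : Type u} [Group G] (hG : pResidual p G = ⊥) {g : G} (hg : g ≠ 1) :
    ∃ (Q : Type u) (_ : Group Q) (f : G →* Q), Finite Q ∧ IsPGroup p Q ∧ f g ≠ 1 := by
  have hgG : g ∉ pResidual p G := by rwa [hG, Subgroup.mem_bot]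
  simp only [pResidual, Subgroup.mem_sInf, not_forall] at hgG
  obtain ⟨N, ⟨_, hfin, hN⟩, hgN⟩ := hgG
  exact ⟨G ⧸ N, inferInstance, QuotientGroup.mk' N, hfin, hN,
    fun h => hgN ((QuotientGroup.eq_one_iff g).1 h)⟩

theorem le_map_subtype (K : Subgroup G) [K.Normal] [Finite (G ⧸ K)] (hK : IsPGroup p (G ⧸ K)) :
    pResidual p G ≤ (pResidual p K).map K.subtype := by
  intro g hg
  refine ⟨⟨g, le_of_isPGroup hK hg⟩, Subgroup.mem_sInf.2 fun N ⟨_, _, hN⟩ => ?_, rfl⟩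
  have : K.FiniteIndex := Subgroup.finiteIndex_of_finite_quotient
  have : N.FiniteIndex := Subgroup.finiteIndex_of_finite_quotient
  have : (N.map K.subtype).FiniteIndex :=
    ⟨by simp [Subgroup.index_map_subtype, Subgroup.FiniteIndex.index_ne_zero]⟩
  have hcore := le_of_isPGroup (isPGroup_quotient_normalCore_map hK hN) hg
  obtain ⟨x, hx, rfl⟩ := Subgroup.normalCore_le _ hcore
  exact hx

end pResidual

section SemidirectProduct

variable {p : ℕ} {N Q : Type*} [Group N] [Group Q] {φ : Q →* MulAut N}

theorem pResidual_semidirectProduct_eq_bot_of_isPGroup [Finite Q] (hQ : IsPGroup p Q)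
    (hN : pResidual p N = ⊥) : pResidual p (N ⋊[φ] Q) = ⊥ := by
  let K : Subgroup (N ⋊[φ] Q) := SemidirectProduct.rightHom.ker
  have eK : (N ⋊[φ] Q) ⧸ K ≃* Q :=
    QuotientGroup.quotientKerEquivOfSurjective _ SemidirectProduct.rightHom_surjective
  have : Finite ((N ⋊[φ] Q) ⧸ K) := .of_equiv Q eK.symm
  have eN : N ≃* K := (MonoidHom.ofInjective SemidirectProduct.inl_injective).trans
    (MulEquiv.subgroupCongr SemidirectProduct.range_inl_eq_ker_rightHom)
  have hK : pResidual p K = ⊥ :=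
    pResidual.eq_bot_of_injective hN eN.symm.toMonoidHom eN.symm.injective
  simpa [hK] using pResidual.le_map_subtype K (hQ.of_equiv eK.symm)

/-- The action factors through its image, and the two projections of `N ⋊ Q` to `N ⋊ φ(Q)` and to
`Q` have no common kernel. -/
theorem pResidual_semidirectProduct_eq_bot [Finite φ.range] (hφ : IsPGroup p φ.range)
    (hN : pResidual p N = ⊥) (hQ : pResidual p Q = ⊥) : pResidual p (N ⋊[φ] Q) = ⊥ := by
  refine (Subgroup.eq_bot_iff_forall _).2 fun x hx => ?_
  have hright : x.right = 1 := by
    simpa [hQ] using pResidual.map_mem SemidirectProduct.rightHom hx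
  let toImage : N ⋊[φ] Q →* N ⋊[φ.range.subtype] φ.range :=
    SemidirectProduct.map (MonoidHom.id N) φ.rangeRestrict fun _ => rfl
  have himage : toImage x = 1 := by
    simpa [pResidual_semidirectProduct_eq_bot_of_isPGroup hφ hN] using pResidual.map_mem toImage hx
  have hleft : x.left = 1 := congrArg SemidirectProduct.left himage
  exact SemidirectProduct.ext hleft hright

end SemidirectProduct

section Integers

theorem exists_intCast_zmod_pow_ne_zero {p : ℕ} (hp : 1 < p) {a : ℤ} (ha : a ≠ 0) :
    ∃ k, (a : ZMod (p ^ k)) ≠ 0 := by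
  refine ⟨a.natAbs, fun h => ?_⟩
  have hdvd : p ^ a.natAbs ∣ a.natAbs :=
    Int.natCast_dvd.1 ((ZMod.intCast_zmod_eq_zero_iff_dvd a _).1 h)
  exact (Nat.le_of_dvd (Int.natAbs_pos.2 ha) hdvd).not_gt (Nat.lt_pow_self hp)

theorem isPGroup_multiplicative_zmod_pow (p k : ℕ) : IsPGroup p (Multiplicative (ZMod (p ^ k))) :=
  .of_card (n := k) (by simp [Nat.card_congr Multiplicative.toAdd])

theorem pResidual_multiplicative_int_eq_bot {p : ℕ} (hp : 1 < p) :
    pResidual p (Multiplicative ℤ) = ⊥ := by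
  refine (Subgroup.eq_bot_iff_forall _).2 fun a ha => ?_
  by_contra hne
  obtain ⟨k, hk⟩ := exists_intCast_zmod_pow_ne_zero hp (a := a.toAdd) hne
  have : NeZero (p ^ k) := ⟨by positivity⟩
  exact hk (pResidual.map_eq_one (isPGroup_multiplicative_zmod_pow p k)
    (AddMonoidHom.toMultiplicative (Int.castAddHom (ZMod (p ^ k)))) ha)

end Integers

section Unitriangular

theorem exists_pow_prime_pow_eq_one {A : Type*} [Ring A] {p : ℕ} (hp : p.Prime)
    (hpA : IsNilpotent (p : A)) {u : A} (hu : IsNilpotent (u - 1)) : ∃ k, u ^ p ^ k = 1 := by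
  obtain ⟨m, hm⟩ := hu
  obtain ⟨n, hn⟩ := hpA
  have hdvd : (p : ℤ[X]) ∣ (X + 1) ^ p ^ m - (X ^ p ^ m + 1) := by
    obtain ⟨r, hr⟩ := exists_add_pow_prime_pow_eq hp (X : ℤ[X]) 1 m
    exact ⟨X * r, by rw [hr]; ring⟩
  obtain ⟨s, hs⟩ := dvd_sub_pow_of_dvd_sub hdvd n
  have hpow : (u - 1) ^ p ^ m = 0 := pow_eq_zero_of_le (Nat.lt_pow_self hp.one_lt).le hm
  have hpn : (p : A) ^ (n + 1) = 0 := by rw [pow_succ, hn, zero_mul]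
  have heval := congrArg (aeval (u - 1)) hs
  refine ⟨m + n, ?_⟩
  simpa [hpow, hpn, ← pow_mul, ← pow_add, sub_eq_zero] using heval

variable {m R : Type*} [Fintype m] [LinearOrder m] [CommRing R]

theorem isNilpotent_of_isUpperTriangular {M : Matrix m m R} (hM : M.IsUpperTriangular)
    (hdiag : ∀ i, M i i = 0) : IsNilpotent M :=
  ⟨Fintype.card m, by
    simpa [Matrix.charpoly_of_isUpperTriangular M hM, hdiag] using Matrix.aeval_self_charpoly M⟩

variable (m R) in
/-- The monoid of upper triangular matrices with ones on the diagonal. Its group of units is the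
unitriangular group; taking units of the monoid saves proving that inverses are unitriangular. -/
def unitriangular : Submonoid (Matrix m m R) where
  carrier := {M | M.IsUpperTriangular ∧ ∀ i, M i i = 1}
  one_mem' := ⟨Matrix.blockTriangular_one, Matrix.one_apply_eq⟩
  mul_mem' {M N} hM hN := by
    refine ⟨hM.1.mul hN.1, fun i => ?_⟩
    rw [Matrix.mul_apply, Finset.sum_eq_single i, hM.2, hN.2, one_mul]
    · intro j _ hji
      rcases hji.lt_or_gt with h | h
      · rw [hM.1 h, zero_mul]
      · rw [hN.1 h, mul_zero]
    · simp

theorem isNilpotent_sub_one_of_mem_unitriangular {M : Matrix m m R} (hM : M ∈ unitriangular m R) :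
    IsNilpotent (M - 1) :=
  isNilpotent_of_isUpperTriangular (hM.1.sub Matrix.blockTriangular_one) fun i => by
    simp [hM.2 i]

theorem isPGroup_units_unitriangular {p : ℕ} (hp : p.Prime) (hR : IsNilpotent (p : R)) :
    IsPGroup p (unitriangular m R)ˣ := by
  refine isPGroup_iff_pow_pow_eq_one.2 fun u => ?_
  have hpM : IsNilpotent (p : Matrix m m R) := by simpa using hR.map (Matrix.scalar m)
  obtain ⟨k, hk⟩ := exists_pow_prime_pow_eq_one hp hpM
    (isNilpotent_sub_one_of_mem_unitriangular u.val.2)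
  exact ⟨k, Units.ext (Subtype.ext (by simpa using hk))⟩

end Unitriangular

section Magnus

open Monoid (CoprodI)

variable {ι R : Type*} [DecidableEq ι] [CommRing R] (L : List ι)

variable (R) in
/-- The matrix over `R` of the edges labelled `i` in the path `0 → 1 → ⋯ → L.length` whose
successive edges are labelled by the letters of `L`. -/
def letterMatrix (i : ι) : Matrix (Fin (L.length + 1)) (Fin (L.length + 1)) R :=
  Matrix.of fun j k => if (k : ℕ) = j + 1 ∧ L[(j : ℕ)]? = some i then 1 else 0

variable {L}

theorem letterMatrix_apply_of_le {i : ι} {j k : Fin (L.length + 1)} (h : k ≤ j) :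
    letterMatrix R L i j k = 0 :=
  if_neg fun hjk => by
    rw [Fin.le_def] at h
    omega

theorem letterMatrix_mul_apply_castSucc (i : ι)
    (M : Matrix (Fin (L.length + 1)) (Fin (L.length + 1)) R) (j : Fin L.length)
    (k : Fin (L.length + 1)) :
    (letterMatrix R L i * M) j.castSucc k = if L[j] = i then M j.succ k else 0 := by
  rw [Matrix.mul_apply, Finset.sum_eq_single j.succ]
  · simp [letterMatrix]
  · intro l _ hl
    have : (l : ℕ) ≠ j + 1 := fun h => hl (Fin.ext h)
    simp [letterMatrix, this]
  · simp

theorem letterMatrix_mul_self (hL : L.IsChain (· ≠ ·)) (i : ι) :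
    letterMatrix R L i * letterMatrix R L i = 0 := by
  ext j k
  induction j using Fin.lastCases with
  | last =>
    exact (Matrix.mul_apply ..).trans <| Finset.sum_eq_zero fun l _ => by
      rw [letterMatrix_apply_of_le (Fin.le_last l), zero_mul]
  | cast j =>
    rw [letterMatrix_mul_apply_castSucc]
    split_ifs with hj
    · refine if_neg fun hk => ?_
      obtain ⟨hlt, hsucc⟩ := List.getElem?_eq_some_iff.1 hk.2
      exact List.isChain_iff_getElem.1 hL j hlt (hj.trans hsucc.symm)
    · rfl

theorem one_add_smul_letterMatrix_mem_unitriangular (i : ι) (c : R) :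
    1 + c • letterMatrix R L i ∈ unitriangular (Fin (L.length + 1)) R :=
  ⟨Matrix.blockTriangular_one.add fun j k (h : k < j) => by simp [letterMatrix_apply_of_le h.le],
    fun j => by simp [letterMatrix_apply_of_le le_rfl]⟩

variable {G : ι → Type*} [∀ i, Group (G i)] (χ : ∀ i, G i →* Multiplicative R)

/-- The unitriangular representation of a free product attached to `R`-valued characters of its
factors and to a sequence of indices `L`. -/
def magnusHom (hL : L.IsChain (· ≠ ·)) : CoprodI G →* unitriangular (Fin (L.length + 1)) R :=
  CoprodI.lift fun i =>
    { toFun g := ⟨1 + (χ i g).toAdd • letterMatrix R L i,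
        one_add_smul_letterMatrix_mem_unitriangular i _⟩
      map_one' := by ext1; simp
      map_mul' g h := by
        ext1
        simp only [map_mul, toAdd_mul, add_smul, Submonoid.coe_mul, add_mul, mul_add, one_mul,
          mul_one, smul_mul_smul_comm, letterMatrix_mul_self hL, smul_zero, add_zero]
        abel }

variable (hL : L.IsChain (· ≠ ·))

theorem magnusHom_of_mul_apply_castSucc {i : ι} (g : G i) (x : CoprodI G) (j : Fin L.length)
    (k : Fin (L.length + 1)) :
    (magnusHom χ hL (CoprodI.of g * x)).1 j.castSucc k = (magnusHom χ hL x).1 j.castSucc k +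
      (χ i g).toAdd * if L[j] = i then (magnusHom χ hL x).1 j.succ k else 0 := by
  simp [magnusHom, add_mul, letterMatrix_mul_apply_castSucc]

theorem magnusHom_prod_apply_of_add_length_lt (w : List (Σ i, G i)) {j k : Fin (L.length + 1)}
    (hjk : j + w.length < k) :
    (magnusHom χ hL (w.map fun l => CoprodI.of l.2).prod).1 j k = 0 := by
  induction w generalizing j with
  | nil => simpa using Matrix.one_apply_ne (Fin.ne_of_lt hjk)
  | cons l w ih =>
    rw [List.length_cons] at hjk
    obtain ⟨j, rfl⟩ := Fin.exists_castSucc_eq.2 (Fin.ne_last_of_lt (show j < k by omega))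
    rw [Fin.val_castSucc] at hjk
    rw [List.map_cons, List.prod_cons, magnusHom_of_mul_apply_castSucc,
      ih (by rw [Fin.val_castSucc]; omega), ih (by rw [Fin.val_succ]; omega)]
    simp

/-- A path of length `w.length` from `j` to the end must use every letter of `w`. -/
theorem magnusHom_prod_apply_last (w : List (Σ i, G i)) {j : Fin (L.length + 1)}
    (hj : L.drop j = w.map Sigma.fst) :
    (magnusHom χ hL (w.map fun l => CoprodI.of l.2).prod).1 j (Fin.last _) =
      (w.map fun l => (χ l.1 l.2).toAdd).prod := by
  induction w generalizing j with
  | nil =>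
    obtain rfl : j = Fin.last _ := Fin.last_le_iff.1 (List.drop_eq_nil_iff.1 hj)
    simp
  | cons l w ih =>
    have hlen : L.length - j = w.length + 1 := by simpa using congrArg List.length hj
    obtain ⟨j, rfl⟩ := Fin.exists_castSucc_eq.2 (Fin.ne_last_of_lt
      (show j < Fin.last _ by rw [Fin.lt_def, Fin.val_last]; omega))
    simp only [Fin.val_castSucc] at hj hlen
    rw [List.drop_eq_getElem_cons j.2, List.map_cons, List.cons.injEq] at hj
    have hzero := magnusHom_prod_apply_of_add_length_lt χ hL w (j := j.castSucc) (k := .last _)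
      (by rw [Fin.val_castSucc, Fin.val_last]; omega)
    rw [List.map_cons, List.prod_cons, magnusHom_of_mul_apply_castSucc, hzero, zero_add,
      if_pos (show L[j] = l.1 from hj.1), ih hj.2, List.map_cons, List.prod_cons]

theorem prod_eq_zero_of_magnusHom_prod_eq_one {w : List (Σ i, G i)} (hw : w ≠ [])
    (hLw : L = w.map Sigma.fst) (h : magnusHom χ hL (w.map fun l => CoprodI.of l.2).prod = 1) :
    (w.map fun l => (χ l.1 l.2).toAdd).prod = 0 := by
  have hlast : (0 : Fin (L.length + 1)) ≠ Fin.last _ := by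
    simpa [Fin.ext_iff, hLw, eq_comm] using hw
  rw [← magnusHom_prod_apply_last χ hL w (j := 0) (by simpa using hLw), h]
  exact Matrix.one_apply_ne hlast

end Magnus

section FreeGroup

theorem pResidual_coprodI_eq_bot {p : ℕ} (hp : p.Prime) {ι : Type*} {G : ι → Type*}
    [∀ i, Group (G i)] (χ : ∀ i, G i →* Multiplicative ℤ)
    (hχ : ∀ i, Function.Injective (χ i)) : pResidual p (Monoid.CoprodI G) = ⊥ := by
  classical
  refine (Subgroup.eq_bot_iff_forall _).2 fun x hx => ?_
  obtain ⟨w, rfl⟩ := Monoid.CoprodI.Word.equiv.symm.surjective x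
  change w.prod ∈ pResidual p _ at hx
  change w.prod = 1
  by_contra hw
  have hne : w.toList ≠ [] := fun h => hw (by simp [Monoid.CoprodI.Word.prod, h])
  have hexp : (w.toList.map fun l => (χ l.1 l.2).toAdd).prod ≠ 0 := by
    refine List.prod_ne_zero fun h0 => ?_
    obtain ⟨l, hl, hl0⟩ := List.mem_map.1 h0
    exact w.ne_one l hl ((map_eq_one_iff _ (hχ l.1)).1 hl0)
  obtain ⟨k, hk⟩ := exists_intCast_zmod_pow_ne_zero hp.one_lt hexp
  have : NeZero (p ^ k) := ⟨pow_ne_zero k hp.ne_zero⟩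
  let reduction : Multiplicative ℤ →* Multiplicative (ZMod (p ^ k)) :=
    AddMonoidHom.toMultiplicative (Int.castAddHom _)
  let ρ := magnusHom (fun i => reduction.comp (χ i)) ((List.isChain_map Sigma.fst).2 w.chain_ne)
  have hunits : ρ.toHomUnits w.prod = 1 :=
    pResidual.map_eq_one (isPGroup_units_unitriangular hp ⟨k, by simp [← Nat.cast_pow]⟩) _ hx
  have hρ : ρ w.prod = 1 := congrArg Units.val hunits
  refine hk ?_
  rw [Int.cast_list_prod, List.map_map]
  exact prod_eq_zero_of_magnusHom_prod_eq_one _ _ hne rfl hρ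

theorem pResidual_freeGroup_eq_bot {p : ℕ} (hp : p.Prime) (α : Type*) :
    pResidual p (FreeGroup α) = ⊥ :=
  pResidual.eq_bot_of_injective
    (pResidual_coprodI_eq_bot hp (fun _ => FreeGroup.mulEquivIntOfUnique.toMonoidHom)
      fun _ => FreeGroup.mulEquivIntOfUnique.injective)
    (freeGroupEquivCoprodI (ι := α)).toMonoidHom freeGroupEquivCoprodI.injective

end FreeGroup

section Cyclic

variable {H : Type*} [Group H]

theorem range_eq_zpowers_ofAdd_one (f : Multiplicative ℤ →* H) :
    f.range = Subgroup.zpowers (f (Multiplicative.ofAdd 1)) := by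
  rw [← Subgroup.range_zpowersHom]
  exact congrArg MonoidHom.range ((zpowersHom H).apply_symm_apply f).symm

theorem isPGroup_zpowers_of_pow_eq_one {g : H} {p k : ℕ} (hg : g ^ p ^ k = 1) :
    IsPGroup p (Subgroup.zpowers g) :=
  .of_card_dvd_pow (n := k) (by simpa [orderOf_dvd_iff_pow_eq_one] using hg)

theorem conj_zpow_eq_of_commute {a t : H} {q : ℕ} (h : Commute t (a ^ q)) {k l : ℤ}
    (hkl : (k : ZMod q) = l) : MulAut.conj (a ^ k) t = MulAut.conj (a ^ l) t := by
  obtain ⟨c, hc⟩ := (ZMod.intCast_eq_intCast_iff_dvd_sub k l q).1 hkl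
  obtain rfl : l = k + q * c := by omega
  have hcomm : Commute (a ^ ((q : ℤ) * c)) t := by
    rw [zpow_mul, zpow_natCast]
    exact (h.zpow_right c).symm
  rw [zpow_add, map_mul, MulAut.mul_apply, MulAut.conj_apply (a ^ ((q : ℤ) * c)), hcomm.eq,
    mul_inv_cancel_right]

end Cyclic

section Shift

/-- Relabelling generators, as an action of the permutations of `α` on the free group on `α`. -/
def permFreeGroup (α : Type*) : Equiv.Perm α →* MulAut (FreeGroup α) where
  toFun := FreeGroup.freeGroupCongr
  map_one' := FreeGroup.freeGroupCongr_refl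
  map_mul' e f := (FreeGroup.freeGroupCongr_trans f e).symm

@[simp]
theorem permFreeGroup_apply_of {α : Type*} (e : Equiv.Perm α) (x : α) :
    permFreeGroup α e (FreeGroup.of x) = FreeGroup.of (e x) :=
  FreeGroup.map.of

variable {ι : Type*} (n : ι → ℕ)

/-- The translation action of `ℤ` on the disjoint union of the `ZMod (n i)`. -/
def shiftPerm : Multiplicative ℤ →* Equiv.Perm (Σ i, ZMod (n i)) where
  toFun k := Equiv.sigmaCongrRight fun _ => Equiv.addRight (k.toAdd : ZMod _)
  map_one' := by ext1; simp
  map_mul' k l := by ext1; simpa [add_assoc] using add_comm _ _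

/-- The action of `ℤ` on a free group that permutes the generators cyclically, with one cycle of
length `n i` for each `i`; the cycle is infinite when `n i = 0`. -/
def shiftFreeGroup : Multiplicative ℤ →* MulAut (FreeGroup (Σ i, ZMod (n i))) :=
  (permFreeGroup _).comp (shiftPerm n)

variable {n}

@[simp]
theorem shiftFreeGroup_apply_of (k : Multiplicative ℤ) (i : ι) (c : ZMod (n i)) :
    shiftFreeGroup n k (FreeGroup.of ⟨i, c⟩) = FreeGroup.of ⟨i, c + (k.toAdd : ℤ)⟩ := by
  simp [shiftFreeGroup, shiftPerm]

theorem shiftFreeGroup_ofAdd_one_pow_eq_one {m : ℕ} (hm : ∀ i, n i ∣ m) :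
    shiftFreeGroup n (Multiplicative.ofAdd 1) ^ m = 1 := by
  rw [← map_pow, ← ofAdd_nsmul, nsmul_one]
  suffices shiftPerm n (Multiplicative.ofAdd (m : ℤ)) = 1 by simp [shiftFreeGroup, this]
  ext1 ⟨i, c⟩
  simp [shiftPerm, (ZMod.natCast_eq_zero_iff m (n i)).2 (hm i)]

end Shift

/-- Relators `tᵢ a^(nᵢ) tᵢ⁻¹ a^(-nᵢ)`, where `Sum.inl ()` is `a` and `Sum.inr i` is `tᵢ`. -/
def commutingRelators {ι : Type*} (n : ι → ℕ) : Set (FreeGroup (Unit ⊕ ι)) :=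
  {w | ∃ i, w = FreeGroup.of (Sum.inr i) * FreeGroup.of (Sum.inl ()) ^ n i *
    (FreeGroup.of (Sum.inr i))⁻¹ * (FreeGroup.of (Sum.inl ()) ^ n i)⁻¹}

/-- The multiple HNN-extension of the infinite cyclic group `⟨a⟩` whose stable letter `tᵢ` commutes
with `a^(nᵢ)`. -/
abbrev CommutingHNN {ι : Type*} (n : ι → ℕ) : Type _ :=
  PresentedGroup (commutingRelators n)

namespace CommutingHNN

variable {ι : Type*} {n : ι → ℕ} {H : Type*} [Group H]

/-- The generator `a` of the base group. -/
def base : CommutingHNN n := PresentedGroup.of (Sum.inl ())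

/-- The stable letter `tᵢ`. -/
def stable (i : ι) : CommutingHNN n := PresentedGroup.of (Sum.inr i)

theorem commute_stable_base_pow (i : ι) : Commute (stable i : CommutingHNN n) (base ^ n i) := by
  have hrel : PresentedGroup.mk (commutingRelators n) _ = 1 := PresentedGroup.one_of_mem ⟨i, rfl⟩
  simp only [map_mul, map_pow, map_inv] at hrel
  rwa [mul_inv_eq_one, mul_inv_eq_iff_eq_mul] at hrel

/-- The universal property of the presentation. -/
def lift (a : H) (t : ι → H) (h : ∀ i, Commute (t i) (a ^ n i)) : CommutingHNN n →* H :=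
  PresentedGroup.toGroup (f := Sum.elim (fun _ => a) t) <| by
    rintro _ ⟨i, rfl⟩
    simp [(h i).eq]

@[simp]
theorem lift_base (a : H) (t : ι → H) (h : ∀ i, Commute (t i) (a ^ n i)) :
    lift a t h base = a := by
  simp [lift, base]

@[simp]
theorem lift_stable (a : H) (t : ι → H) (h : ∀ i, Commute (t i) (a ^ n i)) (i : ι) :
    lift a t h (stable i) = t i := by
  simp [lift, stable]

theorem hom_ext {f g : CommutingHNN n →* H} (hbase : f base = g base)
    (hstable : ∀ i, f (stable i) = g (stable i)) : f = g :=
  PresentedGroup.ext <| by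
    rintro (⟨⟩ | i)
    exacts [hbase, hstable i]

variable (n) in
/-- The embedding that sends `a` to the generator of `ℤ` and `tᵢ` to the free generator `(i, 0)`;
the free generator `(i, c)` then stands for `a^c tᵢ a^(-c)`. -/
def toSemidirect :
    CommutingHNN n →* FreeGroup (Σ i, ZMod (n i)) ⋊[shiftFreeGroup n] Multiplicative ℤ :=
  lift (SemidirectProduct.inr (Multiplicative.ofAdd 1))
    (fun i => SemidirectProduct.inl (FreeGroup.of ⟨i, 0⟩)) fun i => by
      rw [← map_pow, ← ofAdd_nsmul, nsmul_one]
      ext <;> simp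

variable (n) in
/-- The left inverse of `toSemidirect n`, sending the free generator `(i, c)` to `a^c tᵢ a^(-c)`;
the choice of the integer lift of `c` is immaterial because `tᵢ` commutes with `a^(nᵢ)`. -/
def ofSemidirect :
    FreeGroup (Σ i, ZMod (n i)) ⋊[shiftFreeGroup n] Multiplicative ℤ →* CommutingHNN n :=
  SemidirectProduct.lift
    (FreeGroup.lift fun s => MulAut.conj (base ^ (s.2.cast : ℤ)) (stable s.1))
    (zpowersHom _ base) fun k => by
      ext ⟨i, c⟩
      have hc : ((k.toAdd + c.cast : ℤ) : ZMod (n i)) = ((c + (k.toAdd : ℤ)).cast : ℤ) := by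
        simp [add_comm]
      simpa [zpow_add, MulAut.mul_apply] using
        (conj_zpow_eq_of_commute (commute_stable_base_pow i) hc).symm

theorem toSemidirect_injective : Function.Injective (toSemidirect n) := by
  have hleft : (ofSemidirect n).comp (toSemidirect n) = MonoidHom.id _ :=
    hom_ext (by simp [toSemidirect, ofSemidirect]) fun i => by
      simp [toSemidirect, ofSemidirect]
  exact Function.LeftInverse.injective (g := ofSemidirect n) (DFunLike.congr_fun hleft)

theorem pResidual_eq_bot_of_dvd {p k : ℕ} (hp : p.Prime) (hn : ∀ i, n i ∣ p ^ k) :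
    pResidual p (CommutingHNN n) = ⊥ := by
  have hshift := shiftFreeGroup_ofAdd_one_pow_eq_one hn
  have hfin : Finite (shiftFreeGroup n).range := by
    rw [range_eq_zpowers_ofAdd_one]
    exact (isOfFinOrder_iff_pow_eq_one.2 ⟨p ^ k, pow_pos hp.pos k, hshift⟩).finite_zpowers
  have hpgroup : IsPGroup p (shiftFreeGroup n).range := by
    rw [range_eq_zpowers_ofAdd_one]
    exact isPGroup_zpowers_of_pow_eq_one hshift
  exact pResidual.eq_bot_of_injective
    (pResidual_semidirectProduct_eq_bot hpgroup (pResidual_freeGroup_eq_bot hp _)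
      (pResidual_multiplicative_int_eq_bot hp.one_lt))
    (toSemidirect n) toSemidirect_injective

theorem pResidual_eq_bot_of_finite {p : ℕ} (hp : p.Prime) [Finite ι] (σ : ι → ℕ) :
    pResidual p (CommutingHNN fun i => p ^ σ i) = ⊥ := by
  obtain ⟨k, hk⟩ := (Set.finite_range σ).bddAbove
  exact pResidual_eq_bot_of_dvd hp fun i => pow_dvd_pow p (hk ⟨i, rfl⟩)

variable (n) in
/-- The embedding of the HNN-extension that has only the stable letters `tᵢ` with `i ∈ s`. -/
def inclusion (s : Set ι) : CommutingHNN (fun i : s => n i) →* CommutingHNN n :=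
  lift base (fun i => stable i) fun i => commute_stable_base_pow (i : ι)

theorem exists_leftInverse_inclusion (s : Set ι) :
    ∃ ρ : CommutingHNN n →* CommutingHNN (fun i : s => n i),
      Function.LeftInverse ρ (inclusion n s) := by
  classical
  let ρ : CommutingHNN n →* CommutingHNN (fun i : s => n i) :=
    lift base (fun i => if h : i ∈ s then stable ⟨i, h⟩ else 1) fun i => by
      split_ifs with h
      · exact commute_stable_base_pow (⟨i, h⟩ : s)
      · exact Commute.one_left _
  have hρ : ρ.comp (inclusion n s) = MonoidHom.id _ :=
    hom_ext (by simp [ρ, inclusion]) fun i => by simp [ρ, inclusion]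
  exact ⟨ρ, DFunLike.congr_fun hρ⟩

theorem exists_finite_mem_range_inclusion (g : CommutingHNN n) :
    ∃ s : Set ι, s.Finite ∧ g ∈ (inclusion n s).range := by
  classical
  obtain ⟨w, rfl⟩ := PresentedGroup.mk_surjective _ g
  let letters : List (Unit ⊕ ι) := w.toWord.map Prod.fst
  let s : Set ι := Sum.inr ⁻¹' {x | x ∈ letters}
  refine ⟨s, letters.finite_toSet.preimage Sum.inr_injective.injOn, ?_⟩
  have hletter : ∀ x ∈ letters, PresentedGroup.of x ∈ (inclusion n s).range := by
    rintro (⟨⟩ | i) hi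
    · exact ⟨base, lift_base ..⟩
    · exact ⟨stable ⟨i, hi⟩, lift_stable ..⟩
  rw [← FreeGroup.lift_of_apply w, ← FreeGroup.mk_toWord (x := w), FreeGroup.lift_mk,
    map_list_prod, List.map_map]
  refine Subgroup.list_prod_mem _ (List.forall_mem_map.2 ?_)
  rintro ⟨x, b⟩ hx
  have hmem := hletter x (List.mem_map_of_mem hx)
  cases b
  exacts [inv_mem hmem, hmem]

end CommutingHNN

theorem stmt_19_general {p : ℕ} (hp : p.Prime) {ι : Type*} (σ : ι → ℕ) :
    pResidual p (CommutingHNN fun i => p ^ σ i) = ⊥ := by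
  refine (Subgroup.eq_bot_iff_forall _).2 fun g hg => ?_
  obtain ⟨s, hs, x, rfl⟩ := CommutingHNN.exists_finite_mem_range_inclusion g
  obtain ⟨ρ, hρ⟩ := CommutingHNN.exists_leftInverse_inclusion (n := fun i => p ^ σ i) s
  have := hs.to_subtype
  have hx := pResidual.map_mem ρ hg
  rw [hρ, CommutingHNN.pResidual_eq_bot_of_finite hp fun i : s => σ i, Subgroup.mem_bot] at hx
  rw [hx, map_one]

/-- `G = ⟨a, t₁,…,t_r | tᵢ a^(p^σᵢ) tᵢ⁻¹ = a^(p^σᵢ)⟩`; generator `Sum.inl ()` is `a`,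
generator `Sum.inr i` is `tᵢ`. -/
theorem stmt_19 (p : ℕ) (hp : p.Prime) (r : ℕ) (hr : 2 ≤ r) (σ : Fin r → ℕ)
    (g : PresentedGroup
      ({w : FreeGroup (Unit ⊕ Fin r) |
          ∃ i : Fin r,
            w = FreeGroup.of (Sum.inr i) * FreeGroup.of (Sum.inl ()) ^ (p ^ σ i) *
              (FreeGroup.of (Sum.inr i))⁻¹ *
              (FreeGroup.of (Sum.inl ()) ^ (p ^ σ i))⁻¹}))
    (hg : g ≠ 1) :
    ∃ (Q : Type) (_ : Group Q) (f : _ →* Q), Finite Q ∧ IsPGroup p Q ∧ f g ≠ 1 :=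
  pResidual.exists_hom_ne_one (stmt_19_general hp σ) hg
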